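/- arXiv:0911.0290 — 3 statements merged into one kernel-verified Lean document; each statement's English description precedes it below -/
import Mathlib

section
/- Let E be a measurable space equipped with a measurable pseudometric d, let c > 0, and let κ be a Markov kernel on E satisfying the log-Harnack inequality with constant c, i.e. κ(log f)(x) ≤ log(κf(y)) + c·d(x,y)² for every bounded measurable f : E → ℝ with inf f > 0 and all x, y ∈ E. Then for every bounded measurable f : E → ℝ and every x ∈ E, κf(y) → κf(x) whenever d(x,y) → 0; that is, κf is continuous with respect to the pseudometric d (κ is d-strong Feller). -/
/-!
The log-Harnack inequality for `1 + t g` with `0 ≤ g ≤ B` and `t > 0`, combined with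
`r - r² ≤ log (1 + r) ≤ r` for `r ≥ 0`, gives
`t κg(x) - t² B² ≤ κ(log(1 + t g))(x) ≤ log(1 + t κg(y)) + c d(x,y)² ≤ t κg(y) + c d(x,y)²`.
Taking `t = δ > d(x,y)` yields `κg(x) - κg(y) ≤ δ (c + B²)`, and the symmetry of `d` gives the same
bound with `x` and `y` exchanged. A bounded `f` reduces to this case by adding a constant.
-/

open MeasureTheory ProbabilityTheory

/-- The action of a Markov kernel on a real function: `κ f (x) = ∫ f(z) κ(x, dz)`. -/
noncomputable def kact {E : Type*} [MeasurableSpace E]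
    (κ : ProbabilityTheory.Kernel E E) (g : E → ℝ) (x : E) : ℝ :=
  ∫ z, g z ∂(κ x)

lemma le_log_one_add_add_sq {r : ℝ} (hr : 0 ≤ r) : r ≤ Real.log (1 + r) + r ^ 2 := by
  have h := Real.one_sub_inv_le_log_of_pos (show 0 < 1 + r by linarith)
  have h2 : 1 - (1 + r)⁻¹ = r - r ^ 2 / (1 + r) := by
    field_simp
    ring
  have h3 : r ^ 2 / (1 + r) ≤ r ^ 2 := div_le_self (sq_nonneg r) (by linarith)
  linarith

lemma integrable_kernel_of_bdd {E : Type*} [MeasurableSpace E]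
    (κ : ProbabilityTheory.Kernel E E) [IsMarkovKernel κ] {g : E → ℝ} (hg : Measurable g)
    {M : ℝ} (hM : ∀ z, |g z| ≤ M) (x : E) : Integrable g (κ x) :=
  Integrable.of_bound hg.aestronglyMeasurable M (Filter.Eventually.of_forall hM)

/-- The quantitative one-sided bound obtained from the log-Harnack inequality for `1 + t g`. -/
lemma mul_kact_le {E : Type*} [MeasurableSpace E] (d : E → E → ℝ) (c : ℝ)
    (κ : ProbabilityTheory.Kernel E E) [IsMarkovKernel κ]
    (hLH : ∀ f : E → ℝ, Measurable f → (∃ M, ∀ z, |f z| ≤ M) → (∃ ε > 0, ∀ z, ε ≤ f z) →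
      ∀ x y, kact κ (fun z => Real.log (f z)) x ≤ Real.log (kact κ f y) + c * d x y ^ 2)
    {g : E → ℝ} (hg : Measurable g) {B : ℝ} (h0 : ∀ z, 0 ≤ g z) (hB : ∀ z, g z ≤ B)
    {t : ℝ} (ht : 0 < t) (x y : E) :
    t * kact κ g x ≤ t * kact κ g y + c * d x y ^ 2 + t ^ 2 * B ^ 2 := by
  have hgi : ∀ w, Integrable g (κ w) :=
    integrable_kernel_of_bdd κ hg (fun z => by rw [abs_of_nonneg (h0 z)]; exact hB z)
  have htg : ∀ z, 0 ≤ t * g z := fun z => mul_nonneg ht.le (h0 z)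
  have htB : ∀ z, t * g z ≤ t * B := fun z => mul_le_mul_of_nonneg_left (hB z) ht.le
  have hlogle : ∀ z, Real.log (1 + t * g z) ≤ t * g z := fun z => by
    have := Real.log_le_sub_one_of_pos (show 0 < 1 + t * g z by linarith [htg z])
    linarith
  have hli : Integrable (fun z => Real.log (1 + t * g z)) (κ x) := by
    refine integrable_kernel_of_bdd κ (by fun_prop) (M := t * B) (fun z => ?_) x
    rw [abs_of_nonneg (Real.log_nonneg (by linarith [htg z]))]
    exact (hlogle z).trans (htB z)
  have hH := hLH (fun z => 1 + t * g z) (by fun_prop)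
    ⟨1 + t * B, fun z => by rw [abs_of_nonneg (by linarith [htg z])]; linarith [htB z]⟩
    ⟨1, one_pos, fun z => by linarith [htg z]⟩ x y
  have hlow : t * kact κ g x ≤ kact κ (fun z => Real.log (1 + t * g z)) x + t ^ 2 * B ^ 2 := by
    have h1 : ∫ z, t * g z ∂(κ x) ≤ ∫ z, (Real.log (1 + t * g z) + t ^ 2 * B ^ 2) ∂(κ x) := by
      refine integral_mono ((hgi x).const_mul t) (hli.add (integrable_const _)) (fun z => ?_)
      have h2 := le_log_one_add_add_sq (htg z)
      have h3 : (t * g z) ^ 2 ≤ (t * B) ^ 2 := pow_le_pow_left₀ (htg z) (htB z) 2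
      rw [mul_pow t B] at h3
      exact h2.trans (by linarith)
    rw [integral_const_mul, integral_add hli (integrable_const _)] at h1
    simpa [kact] using h1
  have hup : kact κ (fun z => 1 + t * g z) y = 1 + t * kact κ g y := by
    unfold kact
    rw [integral_add (integrable_const _) ((hgi y).const_mul t), integral_const_mul]
    simp
  have hpos : 0 ≤ kact κ g y := integral_nonneg h0
  have hlog := Real.log_le_sub_one_of_pos
    (show 0 < 1 + t * kact κ g y by linarith [mul_nonneg ht.le hpos])
  rw [hup] at hH
  linarith

/-- Let `E` be a measurable space with a measurable pseudometric `d`, `c > 0`,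
and let `κ` be a Markov kernel on `E` satisfying the log-Harnack inequality
`κ(log f)(x) ≤ log(κ f (y)) + c d(x,y)²` for every bounded measurable `f` with `inf f > 0`.
Then for every bounded measurable `f` and every `x`, `κ f (y) → κ f (x)` as `d(x,y) → 0`,
i.e. `κ` is `d`-strong Feller. -/
theorem stmt_3 {E : Type*} [MeasurableSpace E]
    (d : E → E → ℝ) (hd_meas : Measurable (Function.uncurry d))
    (hd_refl : ∀ x, d x x = 0) (hd_symm : ∀ x y, d x y = d y x)
    (hd_tri : ∀ x y z, d x z ≤ d x y + d y z)
    (c : ℝ) (hc : 0 < c)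
    (κ : ProbabilityTheory.Kernel E E) [IsMarkovKernel κ]
    (hLH : ∀ f : E → ℝ, Measurable f → (∃ M, ∀ z, |f z| ≤ M) → (∃ ε > 0, ∀ z, ε ≤ f z) →
      ∀ x y, kact κ (fun z => Real.log (f z)) x ≤ Real.log (kact κ f y) + c * d x y ^ 2) :
    ∀ f : E → ℝ, Measurable f → (∃ M, ∀ z, |f z| ≤ M) →
      ∀ x, ∀ ε > 0, ∃ δ > 0, ∀ y, d x y < δ → |kact κ f y - kact κ f x| < ε := by
  intro f hf ⟨M, hM⟩ x ε hε
  have hd0 : ∀ y, 0 ≤ d x y := fun y => by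
    have := hd_tri x y x
    rw [hd_refl, hd_symm y x] at this
    linarith
  have hA : 0 < c + (2 * M) ^ 2 := by positivity
  have hδ : 0 < ε / (2 * (c + (2 * M) ^ 2)) := by positivity
  refine ⟨_, hδ, fun y hy => ?_⟩
  set δ := ε / (2 * (c + (2 * M) ^ 2)) with hδdef
  have hδA : δ * (c + (2 * M) ^ 2) = ε / 2 := by
    rw [hδdef]
    field_simp
  have hkey := mul_kact_le d c κ hLH (g := fun z => f z + M) (by fun_prop) (B := 2 * M)
    (fun z => by linarith [neg_le_of_abs_le (hM z)])
    (fun z => by linarith [le_of_abs_le (hM z)]) hδ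
  have hshift : ∀ w, kact κ (fun z => f z + M) w = kact κ f w + M := fun w => by
    unfold kact
    rw [integral_add (integrable_kernel_of_bdd κ hf hM w) (integrable_const _)]
    simp
  have hsq : c * d x y ^ 2 ≤ c * δ ^ 2 :=
    mul_le_mul_of_nonneg_left (pow_le_pow_left₀ (hd0 y) hy.le 2) hc.le
  have h1 := hkey x y
  have h2 := hkey y x
  rw [hd_symm y x] at h2
  rw [hshift, hshift] at h1 h2
  have h3 : c * δ ^ 2 + δ ^ 2 * (2 * M) ^ 2 = δ * (ε / 2) := by
    rw [← hδA]
    ring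
  rw [abs_lt]
  constructor
  · have : δ * (kact κ f x - kact κ f y) ≤ δ * (ε / 2) := by linarith
    linarith [le_of_mul_le_mul_left this hδ]
  · have : δ * (kact κ f y - kact κ f x) ≤ δ * (ε / 2) := by linarith
    linarith [le_of_mul_le_mul_left this hδ]
end

section
/- Let (E, d) be a pseudometric space equipped with a σ-algebra containing the d-open sets, let κ be a Markov kernel on E such that x ↦ κ(x, A) is d-continuous for every measurable set A, and let μ be a probability measure on E with full support (μ(U) > 0 for every nonempty d-open U) such that for some constant M ≥ 0, ∫ κ(x, A) μ(dx) ≤ M·μ(A) for every measurable A. Then κ(x,·) is absolutely continuous with respect to μ for every x ∈ E; in particular κ(x,·) possesses a density p(x,·) ∈ L¹(μ) with respect to μ. -/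
open MeasureTheory ProbabilityTheory

/-- Let `(E, d)` be a pseudometric space with a σ-algebra containing the
`d`-open sets, `κ` a Markov kernel on `E` such that `x ↦ κ(x, A)` is `d`-continuous for
every measurable `A`, and `μ` a probability measure on `E` with full support such that
`∫ κ(x, A) μ(dx) ≤ M μ(A)` for all measurable `A` and some `M ≥ 0`.  Then `κ(x,·) ≪ μ`
for every `x`; in particular `κ(x,·)` has a density `p(x,·) ∈ L¹(μ)` w.r.t. `μ`. -/
theorem stmt_6 {E : Type*} [PseudoMetricSpace E] [MeasurableSpace E] [OpensMeasurableSpace E]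
    (κ : ProbabilityTheory.Kernel E E) [IsMarkovKernel κ]
    (hκ_cont : ∀ A : Set E, MeasurableSet A → Continuous (fun x => κ x A))
    (μ : Measure E) [IsProbabilityMeasure μ]
    (hfull : ∀ U : Set E, IsOpen U → U.Nonempty → 0 < μ U)
    (M : ℝ) (hM : 0 ≤ M)
    (hsub : ∀ A : Set E, MeasurableSet A → ∫⁻ x, κ x A ∂μ ≤ ENNReal.ofReal M * μ A) :
    ∀ x : E, κ x ≪ μ ∧
      ∃ p : E → ENNReal, Measurable p ∧ (∫⁻ z, p z ∂μ < ⊤) ∧ κ x = μ.withDensity p := by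
  have hac : ∀ x : E, κ x ≪ μ := by
    intro x
    refine Measure.AbsolutelyContinuous.mk fun A hA hμA => ?_
    -- The bound forces `κ · A = 0` `μ`-a.e.; by continuity and full support, everywhere.
    have : μ.IsOpenPosMeasure := ⟨fun U hU hne => (hfull U hU hne).ne'⟩
    have hint : ∫⁻ y, κ y A ∂μ = 0 := by simpa [hμA] using hsub A hA
    have hae : (fun y => κ y A) =ᵐ[μ] 0 := (lintegral_eq_zero_iff (κ.measurable_coe hA)).1 hint
    exact congrFun (((hκ_cont A hA).ae_eq_iff_eq μ continuous_zero).1 hae) x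
  exact fun x => ⟨hac x, (κ x).rnDeriv μ, Measure.measurable_rnDeriv _ _,
    Measure.lintegral_rnDeriv_lt_top _ _, (Measure.withDensity_rnDeriv_eq _ _ (hac x)).symm⟩
end

section
/- Let E be a measurable space equipped with a measurable pseudometric d, let c ≥ 0 and M ≥ 1. Let κ be a Markov kernel on E satisfying the log-Harnack inequality with constant c, i.e. κ(log f)(x) ≤ log(κf(y)) + c·d(x,y)² for every bounded measurable f : E → ℝ with inf f > 0 and all x, y ∈ E. Let μ be a probability measure on E such that ∫ κf dμ ≤ M·∫ f dμ for every bounded measurable f ≥ 0. Suppose x ∈ E is such that κ(x,·) = p·μ for some nonnegative measurable density p : E → [0,∞). Then ∫ p log p dμ ≤ log M − log ∫ exp(−c·d(x,y)²) μ(dy), with the convention 0·log 0 = 0. -/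
/-!
Truncate the density to `f = max (min p N) N⁻¹` with `N ≥ 1`. The log-Harnack inequality applies to
`f`; exponentiated, it reads `exp (κ(log f)(x)) * exp (-c d(x,y)²) ≤ κf(y)`. Integrating in `y`
against `μ` and using `∫ κf dμ ≤ M ∫ f dμ ≤ M (1 + N⁻¹)` gives
`∫ p log f dμ ≤ log M + log (1 + N⁻¹) - log ∫ exp (-c d(x,y)²) μ(dy)` (`entropy_trunc_le`).

Since `1 ∈ [N⁻¹, N]`, truncation moves values towards `1`, so `|p log f| ≤ |p log p|`. When
`p log p` is `μ`-integrable, dominated convergence as `N → ∞` yields the bound. When it is not, its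
Bochner integral is `0` by convention, and the right-hand side is nonnegative because `M ≥ 1` and
`exp (-c d²) ≤ 1`.
-/

open MeasureTheory ProbabilityTheory

/-- Truncation of a real number to the interval `[N⁻¹, N]`, used for `N ≥ 1`. -/
noncomputable def trunc (N t : ℝ) : ℝ := max (min t N) N⁻¹

lemma trunc_le {N : ℝ} (hN : 1 ≤ N) (t : ℝ) : trunc N t ≤ N :=
  max_le (min_le_right _ _) ((inv_le_one_of_one_le₀ hN).trans hN)

lemma inv_le_trunc (N t : ℝ) : N⁻¹ ≤ trunc N t := le_max_right _ _

lemma trunc_le_add {N t : ℝ} (hN : 1 ≤ N) (ht : 0 ≤ t) : trunc N t ≤ t + N⁻¹ := by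
  have h : 0 ≤ N⁻¹ := by positivity
  exact max_le ((min_le_left _ _).trans (by linarith)) (by linarith)

lemma measurable_trunc (N : ℝ) : Measurable (trunc N) := by
  unfold trunc
  fun_prop

lemma abs_log_trunc_le {N t : ℝ} (hN : 1 ≤ N) (ht : 0 < t) :
    |Real.log (trunc N t)| ≤ |Real.log t| := by
  have hN0 : 0 < N := by linarith
  have hinv : N⁻¹ ≤ 1 := inv_le_one_of_one_le₀ hN
  have hlogN : 0 ≤ Real.log N := Real.log_nonneg hN
  unfold trunc
  rcases le_total t N with h | h
  · rw [min_eq_left h]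
    rcases le_total t N⁻¹ with h2 | h2
    · rw [max_eq_right h2]
      have h3 : Real.log t ≤ Real.log N⁻¹ := Real.log_le_log ht h2
      have h4 : Real.log N⁻¹ ≤ 0 := by rw [Real.log_inv]; linarith
      rw [abs_of_nonpos h4, abs_of_nonpos (h3.trans h4)]
      linarith
    · rw [max_eq_left h2]
  · rw [min_eq_right h, max_eq_left (hinv.trans hN)]
    have h3 : Real.log N ≤ Real.log t := Real.log_le_log hN0 h
    rw [abs_of_nonneg hlogN, abs_of_nonneg (hlogN.trans h3)]
    exact h3

/-- The entropy estimate for the truncated density, with the error term `log (1 + N⁻¹)` coming from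
the lower truncation. -/
lemma entropy_trunc_le {E : Type*} [MeasurableSpace E]
    (d : E → E → ℝ) (hd_meas : Measurable (Function.uncurry d))
    (c M : ℝ) (hc : 0 ≤ c) (hM : 1 ≤ M)
    (κ : ProbabilityTheory.Kernel E E) [IsMarkovKernel κ]
    (hLH : ∀ f : E → ℝ, Measurable f → (∃ B, ∀ z, |f z| ≤ B) → (∃ ε > 0, ∀ z, ε ≤ f z) →
      ∀ x y, kact κ (fun z => Real.log (f z)) x ≤ Real.log (kact κ f y) + c * d x y ^ 2)
    (μ : Measure E) [IsProbabilityMeasure μ]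
    (hsub : ∀ f : E → ℝ, Measurable f → (∃ B, ∀ z, |f z| ≤ B) → (∀ z, 0 ≤ f z) →
      ∫ x, kact κ f x ∂μ ≤ M * ∫ x, f x ∂μ)
    (x : E) (p : E → ℝ) (hp_meas : Measurable p) (hp_nonneg : ∀ z, 0 ≤ p z)
    (hp : κ x = μ.withDensity (fun z => ENNReal.ofReal (p z))) {N : ℝ} (hN : 1 ≤ N) :
    ∫ z, p z * Real.log (trunc N (p z)) ∂μ
      ≤ Real.log M + Real.log (1 + N⁻¹)
        - Real.log (∫ y, Real.exp (-(c * d x y ^ 2)) ∂μ) := by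
  have hN0 : 0 < N := by linarith
  have hinv0 : 0 < N⁻¹ := by positivity
  -- The total mass of `κ x` is `1`, so `p` is a probability density.
  have hp_lint : ∫⁻ z, ENNReal.ofReal (p z) ∂μ = 1 := by
    have h : κ x Set.univ = 1 := measure_univ
    rwa [hp, withDensity_apply _ MeasurableSet.univ, setLIntegral_univ] at h
  have hp_int : Integrable p μ := by
    refine ⟨hp_meas.aestronglyMeasurable, ?_⟩
    rw [hasFiniteIntegral_iff_ofReal (Filter.Eventually.of_forall hp_nonneg), hp_lint]
    exact ENNReal.one_lt_top
  have hp_one : ∫ z, p z ∂μ = 1 := by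
    rw [integral_eq_lintegral_of_nonneg_ae (Filter.Eventually.of_forall hp_nonneg)
      hp_meas.aestronglyMeasurable, hp_lint, ENNReal.toReal_one]
  set f : E → ℝ := fun z => trunc N (p z) with hf
  have hf_meas : Measurable f := (measurable_trunc N).comp hp_meas
  have hf_low : ∀ z, N⁻¹ ≤ f z := fun z => inv_le_trunc N (p z)
  have hf_up : ∀ z, f z ≤ N := fun z => trunc_le hN (p z)
  have hf_nonneg : ∀ z, 0 ≤ f z := fun z => hinv0.le.trans (hf_low z)
  have hf_abs : ∀ z, |f z| ≤ N := fun z => by rw [abs_of_nonneg (hf_nonneg z)]; exact hf_up z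
  have hf_int : ∀ (ν : Measure E) [IsProbabilityMeasure ν], Integrable f ν := fun ν _ =>
    Integrable.of_bound hf_meas.aestronglyMeasurable N (Filter.Eventually.of_forall hf_abs)
  have hkf_low : ∀ y, N⁻¹ ≤ kact κ f y := fun y => by
    have h := integral_mono (μ := κ y) (integrable_const N⁻¹) (hf_int (κ y)) hf_low
    simpa [kact] using h
  have hkf_up : ∀ y, kact κ f y ≤ N := fun y => by
    have h := integral_mono (μ := κ y) (hf_int (κ y)) (integrable_const N) hf_up
    simpa [kact] using h
  have hkf_int : Integrable (kact κ f) μ := by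
    refine Integrable.of_bound
      (hf_meas.stronglyMeasurable.integral_kernel (κ := κ)).aestronglyMeasurable N
      (Filter.Eventually.of_forall fun y => ?_)
    rw [Real.norm_of_nonneg (hinv0.le.trans (hkf_low y))]
    exact hkf_up y
  have hdx : Measurable fun y => d x y := hd_meas.comp measurable_prodMk_left
  have hexp_int : Integrable (fun y => Real.exp (-(c * d x y ^ 2))) μ := by
    refine Integrable.of_bound (by fun_prop) 1 (Filter.Eventually.of_forall fun y => ?_)
    rw [Real.norm_of_nonneg (Real.exp_pos _).le, Real.exp_le_one_iff, neg_nonpos]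
    positivity
  have hZ : 0 < ∫ y, Real.exp (-(c * d x y ^ 2)) ∂μ := integral_exp_pos hexp_int
  have ha : kact κ (fun z => Real.log (f z)) x = ∫ z, p z * Real.log (f z) ∂μ := by
    unfold kact
    rw [hp, integral_withDensity_eq_integral_toReal_smul (by fun_prop)
      (Filter.Eventually.of_forall fun _ => ENNReal.ofReal_lt_top)]
    simp only [ENNReal.toReal_ofReal (hp_nonneg _), smul_eq_mul]
  rw [← ha]
  set a := kact κ (fun z => Real.log (f z)) x
  have hpt : ∀ y, Real.exp a * Real.exp (-(c * d x y ^ 2)) ≤ kact κ f y := fun y => by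
    have h := hLH f hf_meas ⟨N, hf_abs⟩ ⟨N⁻¹, hinv0, hf_low⟩ x y
    rw [← Real.exp_add, ← Real.le_log_iff_exp_le (hinv0.trans_le (hkf_low y))]
    linarith
  have hf_mass : ∫ z, f z ∂μ ≤ 1 + N⁻¹ := by
    have h := integral_mono (hf_int μ) (hp_int.add (integrable_const N⁻¹))
      (fun z => trunc_le_add hN (hp_nonneg z))
    rw [integral_add' hp_int (integrable_const _), hp_one] at h
    simpa using h
  have hmain : Real.exp a * ∫ y, Real.exp (-(c * d x y ^ 2)) ∂μ ≤ M * (1 + N⁻¹) := by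
    rw [← integral_const_mul]
    calc ∫ y, Real.exp a * Real.exp (-(c * d x y ^ 2)) ∂μ
        ≤ ∫ y, kact κ f y ∂μ := integral_mono (hexp_int.const_mul _) hkf_int hpt
      _ ≤ M * ∫ z, f z ∂μ := hsub f hf_meas ⟨N, hf_abs⟩ hf_nonneg
      _ ≤ M * (1 + N⁻¹) := mul_le_mul_of_nonneg_left hf_mass (by linarith)
  have hlog := Real.log_le_log (mul_pos (Real.exp_pos a) hZ) hmain
  rw [Real.log_mul (Real.exp_pos a).ne' hZ.ne', Real.log_exp,
    Real.log_mul (by linarith) (by linarith)] at hlog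
  linarith

/-- Let `E` be a measurable space with a measurable pseudometric `d`, let
`c ≥ 0`, `M ≥ 1`, and let `κ` be a Markov kernel satisfying the log-Harnack inequality
with constant `c`.  Let `μ` be a probability measure with `∫ κf dμ ≤ M ∫ f dμ` for all
bounded measurable `f ≥ 0`.  If `κ(x,·) = p·μ` for a nonnegative measurable density `p`,
then `∫ p log p dμ ≤ log M - log ∫ exp(-c·d(x,y)²) μ(dy)`. -/
theorem stmt_7 {E : Type*} [MeasurableSpace E]
    (d : E → E → ℝ) (hd_meas : Measurable (Function.uncurry d))
    (hd_refl : ∀ x, d x x = 0) (hd_symm : ∀ x y, d x y = d y x)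
    (hd_tri : ∀ x y z, d x z ≤ d x y + d y z)
    (c M : ℝ) (hc : 0 ≤ c) (hM : 1 ≤ M)
    (κ : ProbabilityTheory.Kernel E E) [IsMarkovKernel κ]
    (hLH : ∀ f : E → ℝ, Measurable f → (∃ B, ∀ z, |f z| ≤ B) → (∃ ε > 0, ∀ z, ε ≤ f z) →
      ∀ x y, kact κ (fun z => Real.log (f z)) x ≤ Real.log (kact κ f y) + c * d x y ^ 2)
    (μ : Measure E) [IsProbabilityMeasure μ]
    (hsub : ∀ f : E → ℝ, Measurable f → (∃ B, ∀ z, |f z| ≤ B) → (∀ z, 0 ≤ f z) →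
      ∫ x, kact κ f x ∂μ ≤ M * ∫ x, f x ∂μ)
    (x : E) (p : E → ℝ) (hp_meas : Measurable p) (hp_nonneg : ∀ z, 0 ≤ p z)
    (hp : κ x = μ.withDensity (fun z => ENNReal.ofReal (p z))) :
    ∫ z, p z * Real.log (p z) ∂μ
      ≤ Real.log M - Real.log (∫ y, Real.exp (-(c * d x y ^ 2)) ∂μ) := by
  by_cases hint : Integrable (fun z => p z * Real.log (p z)) μ
  · have hbound : ∀ n : ℕ, ∫ z, p z * Real.log (trunc ((n : ℝ) + 1) (p z)) ∂μ
        ≤ Real.log M + Real.log (1 + ((n : ℝ) + 1)⁻¹)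
          - Real.log (∫ y, Real.exp (-(c * d x y ^ 2)) ∂μ) := fun n =>
      entropy_trunc_le d hd_meas c M hc hM κ hLH μ hsub x p hp_meas hp_nonneg hp
        (by linarith [n.cast_nonneg (α := ℝ)])
    have hN_lim : Filter.Tendsto (fun n : ℕ => (n : ℝ) + 1) Filter.atTop Filter.atTop :=
      Filter.tendsto_atTop_add_const_right _ _ tendsto_natCast_atTop_atTop
    have hinv_lim : Filter.Tendsto (fun n : ℕ => ((n : ℝ) + 1)⁻¹) Filter.atTop (nhds 0) :=
      tendsto_inv_atTop_zero.comp hN_lim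
    have hleft : Filter.Tendsto
        (fun n : ℕ => ∫ z, p z * Real.log (trunc ((n : ℝ) + 1) (p z)) ∂μ)
        Filter.atTop (nhds (∫ z, p z * Real.log (p z) ∂μ)) := by
      refine tendsto_integral_of_dominated_convergence
        (fun z => ‖p z * Real.log (p z)‖) (fun n => ?_) hint.norm (fun n => ?_) ?_
      · exact (hp_meas.mul (Real.measurable_log.comp
          ((measurable_trunc _).comp hp_meas))).aestronglyMeasurable
      · refine Filter.Eventually.of_forall fun z => ?_
        rcases (hp_nonneg z).eq_or_lt with h | h
        · simp [← h]
        · rw [norm_mul, norm_mul]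
          exact mul_le_mul_of_nonneg_left
            (abs_log_trunc_le (by linarith [n.cast_nonneg (α := ℝ)]) h) (norm_nonneg _)
      · refine Filter.Eventually.of_forall fun z => ?_
        rcases (hp_nonneg z).eq_or_lt with h | h
        · simp [← h]
        · -- At a point where `p z > 0` the truncated values are eventually constant.
          refine tendsto_const_nhds.congr' ?_
          filter_upwards [hN_lim.eventually_ge_atTop (p z), hinv_lim.eventually_le_const h]
            with n h1 h2
          rw [trunc, min_eq_left h1, max_eq_left h2]
    have hright : Filter.Tendsto
        (fun n : ℕ => Real.log M + Real.log (1 + ((n : ℝ) + 1)⁻¹)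
          - Real.log (∫ y, Real.exp (-(c * d x y ^ 2)) ∂μ)) Filter.atTop
        (nhds (Real.log M - Real.log (∫ y, Real.exp (-(c * d x y ^ 2)) ∂μ))) := by
      have h1 : Filter.Tendsto (fun n : ℕ => Real.log (1 + ((n : ℝ) + 1)⁻¹))
          Filter.atTop (nhds 0) := by
        simpa using (hinv_lim.const_add 1).log (by norm_num)
      simpa using (h1.const_add (Real.log M)).sub_const
        (Real.log (∫ y, Real.exp (-(c * d x y ^ 2)) ∂μ))
    exact le_of_tendsto_of_tendsto' hleft hright hbound
  · -- The left-hand side is the junk value `0`.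
    rw [integral_undef hint]
    have hle : ∫ y, Real.exp (-(c * d x y ^ 2)) ∂μ ≤ 1 := by
      have h := integral_mono_of_nonneg (μ := μ)
        (Filter.Eventually.of_forall fun y => (Real.exp_pos (-(c * d x y ^ 2))).le)
        (integrable_const (1 : ℝ))
        (Filter.Eventually.of_forall fun y => Real.exp_le_one_iff.mpr
          (neg_nonpos.mpr (mul_nonneg hc (sq_nonneg (d x y)))))
      simpa using h
    have h0 : 0 ≤ ∫ y, Real.exp (-(c * d x y ^ 2)) ∂μ :=
      integral_nonneg fun y => (Real.exp_pos _).le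
    linarith [Real.log_nonneg hM, Real.log_nonpos h0 hle]
end
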